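/- Suppose a multiset M of size nq in AG(2,q) admits exactly 2 special directions d₁ and d₂. Then M is a union of lines whose slopes belong to {d₁, d₂}; that is, M equals, as a multiset, a sum of multisets each consisting of all q points of an affine line with slope d₁ or d₂ taken with multiplicity one. -/

import Mathlib

/-!
Each point `P` lies on one line of every direction. Summing the number of points of `M` over these
`q + 1` lines counts every point of `M` once, except that each copy of `P` is counted `q + 1` times
(`sum_lineCount`). Since `|M| = n q`, a direction that is not special has exactly `n` points on each
of its lines, so this incidence count reads

  `n + q * M(P) = (points on the d₁-line of P) + (points on the d₂-line of P)`.

Hence, in the coordinates given by the two special directions, the multiplicity function is a sum of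
a function of the first coordinate and a function of the second. Choosing the base point so that the
second function attains its minimum there makes both functions nonnegative, and their values are the
numbers of copies of each line.
-/

attribute [local instance] Classical.propDecidable

noncomputable section

open Polynomial

variable {F : Type} [Field F]

/-- Point `P` of `AG(2,q)` lies on the line with slope `d` (`none` stands for slope `∞`)
and parameter `b`. -/
def onAffLine (d : Option F) (b : F) (P : F × F) : Prop :=
  match d with
  | some m => P.2 = m * P.1 + b
  | none => P.1 + b = 0

/-- Number of points of the multiset `M` (counted with multiplicity) on the line with
slope `d` and parameter `b`. -/
def lineCount (M : Multiset (F × F)) (d : Option F) (b : F) : ℕ :=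
  Multiset.countP (onAffLine d b) M

/-- `d` is a mod-special direction of `M` (w.r.t. the prime `p`). -/
def IsModSpecial (p : ℕ) (M : Multiset (F × F)) (d : Option F) : Prop :=
  ¬ ∀ b₁ b₂ : F, (lineCount M d b₁ : ZMod p) = (lineCount M d b₂ : ZMod p)

/-- `d` is a special direction of `M`: some line with slope `d` contains neither
`⌊|M|/q⌋` nor `⌈|M|/q⌉` points of `M`. -/
def IsSpecial [Fintype F] (M : Multiset (F × F)) (d : Option F) : Prop :=
  ¬ ∀ b : F, lineCount M d b = Multiset.card M / Fintype.card F ∨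
      lineCount M d b = (Multiset.card M + Fintype.card F - 1) / Fintype.card F

/-- The multiset of the `q` points of an affine line, each with multiplicity one. -/
def affLine [Fintype F] (d : Option F) (b : F) : Multiset (F × F) :=
  (Finset.univ.filter (onAffLine d b)).val

/-- The projection function of `M` from direction `d`: the unique polynomial of degree
at most `q - 1` whose value at each `b` is the number of points of `M` on the
corresponding line reduced modulo `p` (viewed in the prime subfield of `F`). -/
def prPoly [Fintype F] (M : Multiset (F × F)) (d : Option F) : F[X] :=
  Lagrange.interpolate Finset.univ id (fun b => (lineCount M d b : F))


/-- The parameter `b` of the line with slope `d` through `P`. -/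
def lineParam (d : Option F) (P : F × F) : F :=
  match d with
  | some m => P.2 - m * P.1
  | none => - P.1

theorem onAffLine_iff (d : Option F) (b : F) (P : F × F) :
    onAffLine d b P ↔ lineParam d P = b := by
  cases d with
  | none => simp only [onAffLine, lineParam]; exact add_eq_zero_iff_neg_eq
  | some m => simp only [onAffLine, lineParam]; rw [sub_eq_iff_eq_add, add_comm]

/-- Lines with different slopes meet. -/
theorem exists_lineParam_eq {d₁ d₂ : Option F} (hne : d₁ ≠ d₂) (b₁ b₂ : F) :
    ∃ P : F × F, lineParam d₁ P = b₁ ∧ lineParam d₂ P = b₂ := by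
  cases d₁ with
  | none =>
    cases d₂ with
    | none => exact absurd rfl hne
    | some m => exact ⟨(-b₁, b₂ - m * b₁), by simp [lineParam], by simp [lineParam]⟩
  | some k =>
    cases d₂ with
    | none => exact ⟨(-b₂, b₁ - k * b₂), by simp [lineParam], by simp [lineParam]⟩
    | some m =>
      have hkm : k - m ≠ 0 := fun h => hne (by rw [sub_eq_zero.1 h])
      refine ⟨((b₂ - b₁) / (k - m), b₁ + k * ((b₂ - b₁) / (k - m))), ?_, ?_⟩
      · simp [lineParam]
      · simp only [lineParam]
        field_simp
        ring

/-- Two distinct points are joined by exactly one line; a point lies on `q + 1` lines. -/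
theorem sum_joining [Fintype F] (P Q : F × F) :
    (∑ d : Option F, if onAffLine d (lineParam d P) Q then 1 else 0)
      = 1 + if P = Q then Fintype.card F else 0 := by
  simp only [onAffLine_iff]
  rw [Fintype.sum_option]
  obtain ⟨x, y⟩ := P
  obtain ⟨u, v⟩ := Q
  simp only [lineParam, neg_inj, Prod.mk.injEq]
  by_cases hx : u = x
  · subst hx
    by_cases hy : v = y
    · subst hy; simp
    · have : ¬ y = v := fun h => hy h.symm
      simp [hy, this]
  · have hx' : ¬ x = u := fun h => hx h.symm
    have hs : u - x ≠ 0 := sub_ne_zero.2 hx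
    have key : ∀ m : F, (v - m * u = y - m * x) ↔ m = (v - y) / (u - x) := by
      intro m
      rw [eq_div_iff hs]
      constructor <;> intro h <;> linear_combination -h
    simp [hx, hx', key]

theorem sum_lineCount [Fintype F] (M : Multiset (F × F)) (P : F × F) :
    ∑ d : Option F, lineCount M d (lineParam d P)
      = Multiset.card M + Fintype.card F * Multiset.count P M := by
  induction M using Multiset.induction_on with
  | empty => simp [lineCount]
  | cons Q M ih =>
    simp only [lineCount, Multiset.countP_cons, Finset.sum_add_distrib] at ih ⊢
    rw [ih, sum_joining, Multiset.card_cons, Multiset.count_cons]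
    split_ifs <;> ring

/-- The multiset of lines of slope `d` in which the line with parameter `b` is repeated `u b`
times. -/
def parallelLines [Fintype F] (d : Option F) (u : F → ℕ) : Multiset (Option F × F) :=
  ∑ b : F, u b • {(d, b)}

theorem fst_of_mem_parallelLines [Fintype F] {d : Option F} {u : F → ℕ} {l : Option F × F}
    (hl : l ∈ parallelLines d u) : l.1 = d := by
  obtain ⟨b, -, hb⟩ := Multiset.mem_sum.1 hl
  have := Multiset.mem_of_mem_nsmul hb
  rw [Multiset.mem_singleton.1 this]

theorem count_affLine [Fintype F] (d : Option F) (b : F) (P : F × F) :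
    Multiset.count P (affLine d b) = if lineParam d P = b then 1 else 0 := by
  rw [affLine, Multiset.count_eq_of_nodup (Finset.nodup _)]
  simp [onAffLine_iff]

theorem count_parallelLines [Fintype F] (d : Option F) (u : F → ℕ) (P : F × F) :
    Multiset.count P ((parallelLines d u).map (fun l => affLine l.1 l.2)).sum
      = u (lineParam d P) := by
  have h1 : ((parallelLines d u).map (fun l => affLine l.1 l.2)).sum
      = ∑ b : F, u b • affLine d b := by
    rw [parallelLines, ← Multiset.coe_mapAddMonoidHom, ← Multiset.coe_sumAddMonoidHom,
      map_sum, map_sum]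
    refine Finset.sum_congr rfl fun b _ => ?_
    rw [map_nsmul, map_nsmul]
    simp
  rw [h1, Multiset.count_sum']
  simp [Multiset.count_nsmul, count_affLine]

theorem stmt5 (p h n : ℕ) [Fact p.Prime] (hh : 1 ≤ h)
    (F : Type) [Field F] [Fintype F] [CharP F p] (hcard : Fintype.card F = p ^ h)
    (M : Multiset (F × F)) (hM : Multiset.card M = n * Fintype.card F)
    (d₁ d₂ : Option F) (hne : d₁ ≠ d₂)
    (hspec : ∀ d : Option F, IsSpecial M d ↔ (d = d₁ ∨ d = d₂)) :
    ∃ L : Multiset (Option F × F), (∀ l ∈ L, l.1 = d₁ ∨ l.1 = d₂) ∧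
      M = (L.map (fun l => affLine l.1 l.2)).sum := by
  have hq : 0 < Fintype.card F := Fintype.card_pos
  have hreg : ∀ d, d ≠ d₁ → d ≠ d₂ → ∀ b, lineCount M d b = n := by
    intro d h1 h2 b
    have hns : ¬ IsSpecial M d := fun hs => ((hspec d).1 hs).elim h1 h2
    have hb := not_not.1 hns b
    -- As `q ∣ |M|`, the floor and the ceiling of `|M| / q` are both `n`.
    have hceil : (n * Fintype.card F + Fintype.card F - 1) / Fintype.card F = n := by
      rw [Nat.add_sub_assoc hq, mul_comm, Nat.mul_add_div hq, Nat.div_eq_of_lt (by omega), add_zero]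
    rw [hM, Nat.mul_div_cancel _ hq, hceil] at hb
    exact hb.elim id id
  have key : ∀ P, n + Fintype.card F * Multiset.count P M
      = lineCount M d₁ (lineParam d₁ P) + lineCount M d₂ (lineParam d₂ P) := by
    intro P
    have hsum := sum_lineCount M P
    have hmem : d₂ ∈ Finset.univ.erase d₁ := by simp [hne.symm]
    rw [← Finset.add_sum_erase _ _ (Finset.mem_univ d₁), ← Finset.add_sum_erase _ _ hmem,
      Finset.sum_congr rfl (g := fun _ => n) (fun d hd => by
        simp only [Finset.mem_erase] at hd
        exact hreg d hd.2.1 hd.1 _), hM, Finset.sum_const,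
      Finset.card_erase_of_mem hmem, Finset.card_erase_of_mem (Finset.mem_univ _),
      Finset.card_univ, Fintype.card_option, smul_eq_mul] at hsum
    obtain ⟨k, hk⟩ := Nat.exists_eq_add_of_le' hq
    rw [hk] at hsum ⊢
    simp only [Nat.add_sub_cancel] at hsum
    linarith [mul_comm n k]
  choose pt hpt₁ hpt₂ using exists_lineParam_eq hne
  obtain ⟨c, hc⟩ := Finite.exists_min (fun b => Multiset.count (pt 0 b) M)
  refine ⟨parallelLines d₁ (fun b => Multiset.count (pt b c) M)
    + parallelLines d₂ (fun b => Multiset.count (pt 0 b) M - Multiset.count (pt 0 c) M), ?_, ?_⟩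
  · intro l hl
    exact (Multiset.mem_add.1 hl).imp fst_of_mem_parallelLines fst_of_mem_parallelLines
  · ext P
    rw [Multiset.map_add, Multiset.sum_add, Multiset.count_add, count_parallelLines,
      count_parallelLines]
    -- The incidence count at the four vertices of a parallelogram with sides in the special
    -- directions shows that the two diagonals carry the same multiplicity.
    have e1 := key P
    have e2 := key (pt (lineParam d₁ P) c)
    have e3 := key (pt 0 (lineParam d₂ P))
    have e4 := key (pt 0 c)
    rw [hpt₁, hpt₂] at e2 e3 e4
    have hpar : Multiset.count P M + Multiset.count (pt 0 c) M
        = Multiset.count (pt (lineParam d₁ P) c) M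
          + Multiset.count (pt 0 (lineParam d₂ P)) M := by
      apply Nat.eq_of_mul_eq_mul_left hq
      rw [mul_add, mul_add]
      omega
    have hmin := hc (lineParam d₂ P)
    omega

end
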